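/- (Theorem A) Let φ be a holomorphic self-map of 𝔻. The following are equivalent: (i) the composition operator C_φ : H^∞(𝔻) → H^∞(𝔻) is mean ergodic; (ii) C_φ : H^∞(𝔻) → H^∞(𝔻) is uniformly mean ergodic; (iii) either there exists z₀ ∈ 𝔻 such that the iterates φ^n converge to the constant z₀ uniformly on 𝔻 (i.e. sup_{z∈𝔻}|φ^n(z) − z₀| → 0), or φ is an elliptic automorphism with φ^k = identity for some positive integer k (a periodic elliptic automorphism). -/

import Mathlib

open Metric Set Filter Complex
open scoped Topology Classical

noncomputable section

/-- Membership in the disc algebra `A(𝔻)`: continuous on the closed unit disc and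
holomorphic on the open unit disc. -/
def IsDiscAlg (f : ℂ → ℂ) : Prop :=
  ContinuousOn f (closedBall (0:ℂ) 1) ∧ DifferentiableOn ℂ f (ball (0:ℂ) 1)

/-- Membership in `H^∞(𝔻)`: bounded and holomorphic on the open unit disc. -/
def IsHInf (f : ℂ → ℂ) : Prop :=
  DifferentiableOn ℂ f (ball (0:ℂ) 1) ∧ ∃ M : ℝ, ∀ z ∈ ball (0:ℂ) 1, ‖f z‖ ≤ M

/-- The Cesàro means `(C_φ)_[n] f = (1/n) ∑_{m=1}^n f ∘ φ^m` of the composition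
operator `C_φ f = f ∘ φ`. -/
def cesaro (φ f : ℂ → ℂ) (n : ℕ) (z : ℂ) : ℂ :=
  (n : ℂ)⁻¹ * ∑ m ∈ Finset.Icc 1 n, f (φ^[m] z)

/-- `C_φ` is mean ergodic on `A(𝔻)`: for each `f ∈ A(𝔻)` the Cesàro means converge
in the sup norm on the closed disc. -/
def MeanErgodicDiscAlg (φ : ℂ → ℂ) : Prop :=
  ∀ f : ℂ → ℂ, IsDiscAlg f →
    ∃ g : ℂ → ℂ, TendstoUniformlyOn (cesaro φ f) g atTop (closedBall (0:ℂ) 1)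

/-- `C_φ` is uniformly mean ergodic on `A(𝔻)`: the Cesàro means converge in operator
norm, i.e. uniformly over the unit ball of `A(𝔻)`. -/
def UnifMeanErgodicDiscAlg (φ : ℂ → ℂ) : Prop :=
  ∃ P : (ℂ → ℂ) → ℂ → ℂ, ∀ ε > (0:ℝ), ∃ N : ℕ, ∀ n ≥ N,
    ∀ f : ℂ → ℂ, IsDiscAlg f → (∀ z ∈ closedBall (0:ℂ) 1, ‖f z‖ ≤ 1) →
      ∀ z ∈ closedBall (0:ℂ) 1, ‖cesaro φ f n z - P f z‖ ≤ ε

/-- `C_φ` is mean ergodic on `H^∞(𝔻)`: for each `f ∈ H^∞(𝔻)` the Cesàro means converge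
in the sup norm on the open disc. -/
def MeanErgodicHInf (φ : ℂ → ℂ) : Prop :=
  ∀ f : ℂ → ℂ, IsHInf f →
    ∃ g : ℂ → ℂ, TendstoUniformlyOn (cesaro φ f) g atTop (ball (0:ℂ) 1)

/-- `C_φ` is uniformly mean ergodic on `H^∞(𝔻)`: the Cesàro means converge in operator
norm, i.e. uniformly over the unit ball of `H^∞(𝔻)`. -/
def UnifMeanErgodicHInf (φ : ℂ → ℂ) : Prop :=
  ∃ P : (ℂ → ℂ) → ℂ → ℂ, ∀ ε > (0:ℝ), ∃ N : ℕ, ∀ n ≥ N,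
    ∀ f : ℂ → ℂ, IsHInf f → (∀ z ∈ ball (0:ℂ) 1, ‖f z‖ ≤ 1) →
      ∀ z ∈ ball (0:ℂ) 1, ‖cesaro φ f n z - P f z‖ ≤ ε

/-- `φ` is an automorphism (biholomorphic self-map) of the open unit disc. -/
def IsDiscAutomorphism (φ : ℂ → ℂ) : Prop :=
  DifferentiableOn ℂ φ (ball (0:ℂ) 1) ∧ MapsTo φ (ball (0:ℂ) 1) (ball (0:ℂ) 1) ∧
  ∃ ψ : ℂ → ℂ, DifferentiableOn ℂ ψ (ball (0:ℂ) 1) ∧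
    MapsTo ψ (ball (0:ℂ) 1) (ball (0:ℂ) 1) ∧
    (∀ z ∈ ball (0:ℂ) 1, ψ (φ z) = z) ∧ ∀ z ∈ ball (0:ℂ) 1, φ (ψ z) = z

/-- An elliptic automorphism of the disc: an automorphism with a fixed point in `𝔻`. -/
def IsEllipticAutomorphism (φ : ℂ → ℂ) : Prop :=
  IsDiscAutomorphism φ ∧ ∃ z ∈ ball (0:ℂ) 1, φ z = z

/-- A hyperbolic automorphism of the disc: an automorphism with exactly two fixed
points, both on the unit circle. -/
def IsHyperbolicAutomorphism (φ : ℂ → ℂ) : Prop :=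
  IsDiscAutomorphism φ ∧ ∃ p q : ℂ, p ≠ q ∧ ‖p‖ = 1 ∧ ‖q‖ = 1 ∧ φ p = p ∧ φ q = q ∧
    ∀ z ∈ closedBall (0:ℂ) 1, φ z = z → z = p ∨ z = q

/-- A parabolic automorphism of the disc: an automorphism with exactly one fixed
point, lying on the unit circle. -/
def IsParabolicAutomorphism (φ : ℂ → ℂ) : Prop :=
  IsDiscAutomorphism φ ∧ ∃ p : ℂ, ‖p‖ = 1 ∧ φ p = p ∧
    ∀ z ∈ closedBall (0:ℂ) 1, φ z = z → z = p

/-- A set `J ⊆ ℕ` has density one: `#(J ∩ [0,N]) / N → 1` as `N → ∞`. -/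
def HasDensityOne (J : Set ℕ) : Prop :=
  Tendsto (fun N : ℕ => (((Finset.range (N + 1)).filter (fun n => n ∈ J)).card : ℝ) / N)
    atTop (𝓝 1)

/-- A typical weight on `𝔻`: continuous, strictly positive, bounded, radial,
non-increasing in `|z|`, and tending to `0` as `|z| → 1`. -/
def IsTypicalWeight (v : ℂ → ℝ) : Prop :=
  ContinuousOn v (ball (0:ℂ) 1) ∧ (∀ z ∈ ball (0:ℂ) 1, 0 < v z) ∧
  (∃ M : ℝ, ∀ z ∈ ball (0:ℂ) 1, v z ≤ M) ∧
  (∀ z ∈ ball (0:ℂ) 1, ∀ w ∈ ball (0:ℂ) 1, ‖z‖ = ‖w‖ → v z = v w) ∧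
  (∀ z ∈ ball (0:ℂ) 1, ∀ w ∈ ball (0:ℂ) 1, ‖z‖ ≤ ‖w‖ → v w ≤ v z) ∧
  (∀ ε > (0:ℝ), ∃ r : ℝ, r < 1 ∧ ∀ z ∈ ball (0:ℂ) 1, r ≤ ‖z‖ → v z < ε)

/-- Membership in the weighted space `H_v^∞`. -/
def IsHvInf (v : ℂ → ℝ) (f : ℂ → ℂ) : Prop :=
  DifferentiableOn ℂ f (ball (0:ℂ) 1) ∧ ∃ M : ℝ, ∀ z ∈ ball (0:ℂ) 1, v z * ‖f z‖ ≤ M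

/-- Membership in the weighted space `H_v^0`. -/
def IsHv0 (v : ℂ → ℝ) (f : ℂ → ℂ) : Prop :=
  IsHvInf v f ∧
  ∀ ε > (0:ℝ), ∃ r : ℝ, r < 1 ∧ ∀ z ∈ ball (0:ℂ) 1, r ≤ ‖z‖ → v z * ‖f z‖ < ε

/-! ### Moebius involutions and Schwarz-Pick -/

def mob (p z : ℂ) : ℂ := (p - z) / (1 - (starRingEnd ℂ) p * z)

lemma den_norm_pos {p z : ℂ} (hp : ‖p‖ < 1) (hz : ‖z‖ ≤ 1) :
    0 < 1 - ‖p‖ ∧ 1 - ‖p‖ ≤ ‖1 - (starRingEnd ℂ) p * z‖ := by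
  refine ⟨by linarith, ?_⟩
  have h1 : ‖(starRingEnd ℂ) p * z‖ ≤ ‖p‖ := by
    rw [norm_mul, RCLike.norm_conj]
    nlinarith [norm_nonneg p]
  have := norm_sub_norm_le (1 : ℂ) ((starRingEnd ℂ) p * z)
  rw [norm_one] at this
  linarith

lemma den_ne {p z : ℂ} (hp : ‖p‖ < 1) (hz : ‖z‖ ≤ 1) : 1 - (starRingEnd ℂ) p * z ≠ 0 := by
  have := den_norm_pos hp hz
  exact norm_pos_iff.1 (by linarith)

lemma norm_id (p z : ℂ) : ‖1 - (starRingEnd ℂ) p * z‖ ^ 2 - ‖p - z‖ ^ 2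
    = (1 - ‖p‖ ^ 2) * (1 - ‖z‖ ^ 2) := by
  rw [Complex.sq_norm, Complex.sq_norm, Complex.sq_norm, Complex.sq_norm]
  simp only [Complex.normSq_apply, Complex.sub_re, Complex.sub_im, Complex.mul_re, Complex.mul_im,
    Complex.conj_re, Complex.conj_im, Complex.one_re, Complex.one_im]
  ring

lemma mob_id {p z : ℂ} (hp : ‖p‖ < 1) (hz : ‖z‖ ≤ 1) : 1 - ‖mob p z‖ ^ 2
    = (1 - ‖p‖ ^ 2) * (1 - ‖z‖ ^ 2) / ‖1 - (starRingEnd ℂ) p * z‖ ^ 2 := by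
  have h := norm_pos_iff.2 (den_ne hp hz)
  rw [mob, norm_div, ← norm_id, div_pow, sub_div, div_self (by positivity)]

lemma mob_lt {p z : ℂ} (hp : ‖p‖ < 1) (hz : ‖z‖ < 1) : ‖mob p z‖ < 1 := by
  have h := norm_pos_iff.2 (den_ne hp hz.le)
  have h1 := mob_id hp hz.le
  have h2 : 0 < (1 - ‖p‖ ^ 2) * (1 - ‖z‖ ^ 2) / ‖1 - (starRingEnd ℂ) p * z‖ ^ 2 := by
    have : 0 < 1 - ‖p‖ ^ 2 := by nlinarith [norm_nonneg p]
    have : 0 < 1 - ‖z‖ ^ 2 := by nlinarith [norm_nonneg z]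
    positivity
  nlinarith [norm_nonneg (mob p z)]

lemma mob_self (p : ℂ) : mob p p = 0 := by simp [mob]
lemma mob_zero (p : ℂ) : mob p 0 = p := by simp [mob]

lemma mob_mob {p z : ℂ} (hp : ‖p‖ < 1) (hz : ‖z‖ < 1) : mob p (mob p z) = z := by
  have h1 := den_ne hp hz.le
  have h2 := den_ne hp (mob_lt hp hz).le
  have h3 := den_ne hp hp.le
  have h4 : mob p z * (1 - (starRingEnd ℂ) p * z) = p - z := by
    unfold mob; exact div_mul_cancel₀ _ h1
  rw [mob, div_eq_iff h2]
  have : (p - mob p z) * (1 - (starRingEnd ℂ) p * z)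
      = z * (1 - (starRingEnd ℂ) p * mob p z) * (1 - (starRingEnd ℂ) p * z) := by
    linear_combination (-1 + z * (starRingEnd ℂ) p) * h4
  exact mul_right_cancel₀ h1 this

lemma mob_diff {p : ℂ} (hp : ‖p‖ < 1) : DifferentiableOn ℂ (mob p) (ball 0 1) := by
  intro z hz
  have hz' : ‖z‖ < 1 := by simpa using hz
  have := den_ne hp hz'.le
  unfold mob
  apply DifferentiableAt.differentiableWithinAt
  fun_prop (disch := assumption)

lemma mob_maps {p : ℂ} (hp : ‖p‖ < 1) : MapsTo (mob p) (ball 0 1) (ball 0 1) := by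
  intro z hz
  have hz' : ‖z‖ < 1 := by simpa using hz
  simpa using mob_lt hp hz'

/-- Lipschitz bound for `mob p`. -/
lemma mob_lip {p z w : ℂ} (hp : ‖p‖ < 1) (hz : ‖z‖ < 1) (hw : ‖w‖ < 1) :
    ‖mob p z - mob p w‖ ≤ ‖z - w‖ * (1 / (1 - ‖p‖) ^ 2) := by
  have h1 := den_ne hp hz.le
  have h2 := den_ne hp hw.le
  have e : mob p z - mob p w = -(z - w) * (1 - (starRingEnd ℂ) p * p) /
      ((1 - (starRingEnd ℂ) p * z) * (1 - (starRingEnd ℂ) p * w)) := by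
    unfold mob
    rw [div_sub_div _ _ h1 h2]
    congr 1
    ring
  obtain ⟨a0, a1⟩ := den_norm_pos hp hz.le
  obtain ⟨_, a2⟩ := den_norm_pos hp hw.le
  have e2 : ‖1 - (starRingEnd ℂ) p * p‖ ≤ 1 := by
    have : (1 - (starRingEnd ℂ) p * p) = ((1 - ‖p‖ ^ 2 : ℝ) : ℂ) := by
      rw [mul_comm, Complex.mul_conj, Complex.normSq_eq_norm_sq]; push_cast; ring
    rw [this, Complex.norm_real, Real.norm_eq_abs, abs_le]
    constructor <;> nlinarith [norm_nonneg p]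
  rw [e, norm_div, norm_mul, norm_mul, norm_neg, mul_one_div]
  apply div_le_div₀ (norm_nonneg _)
  · nlinarith [norm_nonneg (z - w)]
  · positivity
  · rw [sq]; exact mul_le_mul a1 a2 a0.le (norm_nonneg _)

lemma schwarz0 {φ : ℂ → ℂ} (hd : DifferentiableOn ℂ φ (ball (0:ℂ) 1))
    (hm : MapsTo φ (ball (0:ℂ) 1) (ball (0:ℂ) 1)) (h0 : φ 0 = 0) {z : ℂ} (hz : ‖z‖ < 1) :
    ‖φ z‖ ≤ ‖z‖ :=
  Complex.norm_le_norm_of_mapsTo_ball hd (hm.mono_right ball_subset_closedBall) h0 hz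

lemma schwarz_pick {φ : ℂ → ℂ} (hd : DifferentiableOn ℂ φ (ball (0:ℂ) 1))
    (hm : MapsTo φ (ball (0:ℂ) 1) (ball (0:ℂ) 1)) {z w : ℂ} (hz : ‖z‖ < 1) (hw : ‖w‖ < 1) :
    ‖mob (φ z) (φ w)‖ ≤ ‖mob z w‖ := by
  have hφz : ‖φ z‖ < 1 := by simpa using hm (show z ∈ ball (0:ℂ) 1 by simpa using hz)
  have := schwarz0 (φ := mob (φ z) ∘ φ ∘ mob z)
    ((mob_diff hφz).comp (hd.comp (mob_diff hz) (mob_maps hz)) (hm.comp (mob_maps hz)))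
    ((mob_maps hφz).comp (hm.comp (mob_maps hz))) (by simp [mob_zero, mob_self])
    (mob_lt hz hw)
  simpa [mob_mob hz hw] using this

lemma iter_diff {φ : ℂ → ℂ} (hd : DifferentiableOn ℂ φ (ball (0:ℂ) 1))
    (hm : MapsTo φ (ball (0:ℂ) 1) (ball (0:ℂ) 1)) (n : ℕ) :
    DifferentiableOn ℂ (φ^[n]) (ball (0:ℂ) 1) := by
  induction n with
  | zero => simpa using differentiableOn_id
  | succ n ih =>
    rw [Function.iterate_succ]
    exact ih.comp hd hm

lemma iter_lt {φ : ℂ → ℂ} (hm : MapsTo φ (ball (0:ℂ) 1) (ball (0:ℂ) 1)) (n : ℕ) {z : ℂ}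
    (hz : ‖z‖ < 1) : ‖φ^[n] z‖ < 1 := by
  simpa using hm.iterate n (show z ∈ ball (0:ℂ) 1 by simpa using hz)

/-- Points at bounded pseudohyperbolic distance. -/
lemma rho_bound {z w : ℂ} {r : ℝ} (hz : ‖z‖ < 1) (hw : ‖w‖ < 1) (hr0 : 0 ≤ r) (hr : r < 1)
    (h : ‖mob z w‖ ≤ r) : ‖z - w‖ ≤ 2 / (1 - r) * (1 - ‖z‖) := by
  have h1 := norm_pos_iff.2 (den_ne hz hw.le)
  rw [mob, norm_div, div_le_iff₀ h1] at h
  have e : 1 - (starRingEnd ℂ) z * w = (1 - (starRingEnd ℂ) z * z) + (starRingEnd ℂ) z * (z - w) := by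
    ring
  have e2 : ‖1 - (starRingEnd ℂ) z * z‖ = 1 - ‖z‖ ^ 2 := by
    have : (1 - (starRingEnd ℂ) z * z) = ((1 - ‖z‖ ^ 2 : ℝ) : ℂ) := by
      rw [mul_comm, Complex.mul_conj, Complex.normSq_eq_norm_sq]; push_cast; ring
    rw [this, Complex.norm_real, Real.norm_eq_abs, abs_of_nonneg]
    nlinarith [norm_nonneg z]
  have e3 : ‖1 - (starRingEnd ℂ) z * w‖ ≤ (1 - ‖z‖ ^ 2) + ‖z - w‖ := by
    rw [e]
    refine (norm_add_le _ _).trans ?_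
    rw [e2, norm_mul, RCLike.norm_conj]
    nlinarith [norm_nonneg (z - w), norm_nonneg z]
  rw [div_mul_eq_mul_div, le_div_iff₀ (by linarith)]
  have e4 : 1 - ‖z‖ ^ 2 ≤ 2 * (1 - ‖z‖) := by nlinarith [norm_nonneg z]
  have e5 : 0 ≤ 1 - ‖z‖ ^ 2 := by nlinarith [norm_nonneg z]
  nlinarith [norm_nonneg (z - w)]

/-! ### Bounded orbits give fixed points (asymptotic centre argument) -/

def hypD (w z : ℂ) : ℝ := ‖1 - (starRingEnd ℂ) w * z‖ ^ 2 / ((1 - ‖w‖ ^ 2) * (1 - ‖z‖ ^ 2))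

lemma one_sub_sq_pos {z : ℂ} (hz : ‖z‖ < 1) : 0 < 1 - ‖z‖ ^ 2 := by
  nlinarith [norm_nonneg z]

lemma hypD_eq {w z : ℂ} (hw : ‖w‖ < 1) (hz : ‖z‖ < 1) :
    hypD w z = 1 + ‖w - z‖ ^ 2 / ((1 - ‖w‖ ^ 2) * (1 - ‖z‖ ^ 2)) := by
  have h1 := one_sub_sq_pos hw
  have h2 := one_sub_sq_pos hz
  have h3 := norm_id w z
  rw [hypD, div_eq_iff (by positivity), add_mul, div_mul_cancel₀ _ (by positivity)]
  linarith

lemma hypD_ge {w z : ℂ} (hw : ‖w‖ < 1) (hz : ‖z‖ < 1) : 1 ≤ hypD w z := by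
  have h1 := one_sub_sq_pos hw
  have h2 := one_sub_sq_pos hz
  rw [hypD_eq hw hz]
  have : 0 ≤ ‖w - z‖ ^ 2 / ((1 - ‖w‖ ^ 2) * (1 - ‖z‖ ^ 2)) := by positivity
  linarith

lemma hypD_gt {w z : ℂ} (hw : ‖w‖ < 1) (hz : ‖z‖ < 1) (h : w ≠ z) : 1 < hypD w z := by
  have h1 := one_sub_sq_pos hw
  have h2 := one_sub_sq_pos hz
  rw [hypD_eq hw hz]
  have h4 : 0 < ‖w - z‖ := norm_pos_iff.2 (sub_ne_zero.2 h)
  have : 0 < ‖w - z‖ ^ 2 / ((1 - ‖w‖ ^ 2) * (1 - ‖z‖ ^ 2)) := by positivity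
  linarith

lemma hypD_mob {w z : ℂ} (hw : ‖w‖ < 1) (hz : ‖z‖ < 1) : hypD w z = 1 / (1 - ‖mob w z‖ ^ 2) := by
  rw [mob_id hw hz.le, one_div_div, hypD]

lemma hypD_contr {φ : ℂ → ℂ} (hd : DifferentiableOn ℂ φ (ball (0:ℂ) 1))
    (hm : MapsTo φ (ball (0:ℂ) 1) (ball (0:ℂ) 1)) {z w : ℂ} (hz : ‖z‖ < 1) (hw : ‖w‖ < 1) :
    hypD (φ z) (φ w) ≤ hypD z w := by
  have h1 := iter_lt hm 1 hz
  have h2 := iter_lt hm 1 hw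
  simp only [Function.iterate_one] at h1 h2
  have h3 := schwarz_pick hd hm hz hw
  rw [hypD_mob hz hw, hypD_mob h1 h2]
  apply one_div_le_one_div_of_le (one_sub_sq_pos (mob_lt hz hw))
  nlinarith [norm_nonneg (mob (φ z) (φ w))]

lemma exists_phase (a : ℂ) : ∃ θ : ℂ, ‖θ‖ = 1 ∧ θ * a = ‖a‖ := by
  by_cases h : a = 0
  · exact ⟨1, by simp, by simp [h]⟩
  · have h' := norm_pos_iff.2 h
    refine ⟨‖a‖ / a, ?_, ?_⟩
    · rw [norm_div, Complex.norm_real, norm_norm, div_self h'.ne']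
    · field_simp

lemma midpoint_aux (A B : ℝ) (p q θ : ℂ) (hθ : ‖θ‖ = 1)
    (hθ2 : θ * (1 - (starRingEnd ℂ) p * q) = ‖1 - (starRingEnd ℂ) p * q‖) :
    ‖(A : ℂ) + θ * B‖ ^ 2 - ‖(A : ℂ) * p + θ * B * q‖ ^ 2 =
      A ^ 2 * (1 - ‖p‖ ^ 2) + B ^ 2 * (1 - ‖q‖ ^ 2) + 2 * A * B * ‖1 - (starRingEnd ℂ) p * q‖ := by
  have h1 := congrArg Complex.re hθ2
  have h3 : ‖θ‖ ^ 2 = 1 := by rw [hθ]; norm_num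
  rw [Complex.ofReal_re] at h1
  rw [← h1]
  rw [Complex.sq_norm] at h3 ⊢
  rw [Complex.sq_norm, Complex.sq_norm, Complex.sq_norm]
  simp only [Complex.normSq_apply, Complex.sub_re, Complex.sub_im, Complex.mul_re, Complex.mul_im,
    Complex.conj_re, Complex.conj_im, Complex.one_re, Complex.one_im, Complex.add_re,
    Complex.add_im, Complex.ofReal_re, Complex.ofReal_im] at h3 ⊢
  linear_combination (B ^ 2 * (1 - q.re ^ 2 - q.im ^ 2)) * h3

set_option maxHeartbeats 1600000 in
lemma exists_midpoint {p q : ℂ} (hp : ‖p‖ < 1) (hq : ‖q‖ < 1) :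
    ∃ m : ℂ, ‖m‖ < 1 ∧ ∀ (z : ℂ) (C : ℝ), ‖z‖ < 1 → hypD p z ≤ C → hypD q z ≤ C →
      hypD m z ≤ 2 / (1 + √(hypD p q)) * C := by
  obtain ⟨θ, hθ, hθ2⟩ := exists_phase (1 - (starRingEnd ℂ) p * q)
  have hp1 := one_sub_sq_pos hp
  have hq1 := one_sub_sq_pos hq
  set s := √(1 - ‖p‖ ^ 2) with hs
  set t := √(1 - ‖q‖ ^ 2) with ht
  have hs0 : 0 < s := Real.sqrt_pos.2 hp1
  have ht0 : 0 < t := Real.sqrt_pos.2 hq1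
  have hs2 : s ^ 2 = 1 - ‖p‖ ^ 2 := Real.sq_sqrt hp1.le
  have ht2 : t ^ 2 = 1 - ‖q‖ ^ 2 := Real.sq_sqrt hq1.le
  set c := √(hypD p q) with hc
  have hc0 : 0 ≤ c := Real.sqrt_nonneg _
  have hc' : c = ‖1 - (starRingEnd ℂ) p * q‖ / (s * t) := by
    rw [hc, hypD, ← hs2, ← ht2, ← mul_pow, ← div_pow]
    exact Real.sqrt_sq (by positivity)
  have hmid := midpoint_aux (1 / s) (1 / t) p q θ hθ hθ2
  set x : ℂ := ((1 / s : ℝ) : ℂ) + θ * ((1 / t : ℝ) : ℂ) with hx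
  set y : ℂ := ((1 / s : ℝ) : ℂ) * p + θ * ((1 / t : ℝ) : ℂ) * q with hy
  have hxy : ‖x‖ ^ 2 - ‖y‖ ^ 2 = 2 + 2 * c := by
    rw [hmid, hc', ← hs2, ← ht2]
    field_simp
    ring
  have hx0 : 0 < ‖x‖ := by
    by_contra h
    have : ‖x‖ = 0 := le_antisymm (not_lt.1 h) (norm_nonneg _)
    rw [this] at hxy
    nlinarith [sq_nonneg ‖y‖]
  have hx1 : x ≠ 0 := norm_pos_iff.1 hx0
  have hyx : ‖y / x‖ ^ 2 = ‖y‖ ^ 2 / ‖x‖ ^ 2 := by rw [norm_div, div_pow]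
  have hm1 : 1 - ‖y / x‖ ^ 2 = (2 + 2 * c) / ‖x‖ ^ 2 := by
    rw [hyx, ← hxy]; field_simp
  have hm : ‖y / x‖ < 1 := by
    have : 0 < (2 + 2 * c) / ‖x‖ ^ 2 := by positivity
    nlinarith [norm_nonneg (y / x)]
  refine ⟨y / x, hm, ?_⟩
  intro z C hz h1 h2
  have hz1 := one_sub_sq_pos hz
  have hC : 0 ≤ C := by linarith [hypD_ge hp hz]
  have key : ‖x‖ * ‖1 - (starRingEnd ℂ) (y / x) * z‖ ≤
      ‖1 - (starRingEnd ℂ) p * z‖ / s + ‖1 - (starRingEnd ℂ) q * z‖ / t := by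
    have e : (starRingEnd ℂ) x * (1 - (starRingEnd ℂ) (y / x) * z) =
        ((1 / s : ℝ) : ℂ) * (1 - (starRingEnd ℂ) p * z)
        + (starRingEnd ℂ) θ * ((1 / t : ℝ) : ℂ) * (1 - (starRingEnd ℂ) q * z) := by
      have hx2 : (starRingEnd ℂ) x ≠ 0 := by simpa using hx1
      have : (starRingEnd ℂ) x * (1 - (starRingEnd ℂ) (y / x) * z) =
        (starRingEnd ℂ) x - (starRingEnd ℂ) y * z := by
        rw [map_div₀, mul_sub, ← mul_assoc, mul_div_cancel₀ _ hx2, mul_one]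
      rw [this, hx, hy]
      simp only [map_add, map_mul, Complex.conj_ofReal]
      ring
    have e2 := congrArg norm e
    rw [norm_mul, RCLike.norm_conj] at e2
    rw [e2]
    refine (norm_add_le _ _).trans ?_
    rw [norm_mul, norm_mul, norm_mul, RCLike.norm_conj, hθ, Complex.norm_real, Complex.norm_real,
      Real.norm_of_nonneg (by positivity), Real.norm_of_nonneg (by positivity)]
    apply le_of_eq
    ring
  have k1 : (‖1 - (starRingEnd ℂ) p * z‖ / s) ^ 2 ≤ C * (1 - ‖z‖ ^ 2) := by
    rw [hypD, ← hs2, div_le_iff₀ (by positivity)] at h1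
    rw [div_pow, div_le_iff₀ (by positivity)]
    linarith
  have k2 : (‖1 - (starRingEnd ℂ) q * z‖ / t) ^ 2 ≤ C * (1 - ‖z‖ ^ 2) := by
    rw [hypD, ← ht2, div_le_iff₀ (by positivity)] at h2
    rw [div_pow, div_le_iff₀ (by positivity)]
    linarith
  have k3 : (‖x‖ * ‖1 - (starRingEnd ℂ) (y / x) * z‖) ^ 2 ≤ 4 * (C * (1 - ‖z‖ ^ 2)) := by
    refine (pow_le_pow_left₀ (by positivity) key 2).trans ?_
    nlinarith [sq_nonneg (‖1 - (starRingEnd ℂ) p * z‖ / s - ‖1 - (starRingEnd ℂ) q * z‖ / t)]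
  rw [hypD, hm1, div_mul_eq_mul_div, div_div_eq_mul_div, div_mul_eq_mul_div, div_le_div_iff₀ (by positivity) (by positivity)]
  rw [mul_pow] at k3
  nlinarith

lemma exists_fixed_of_bounded {φ : ℂ → ℂ} (hd : DifferentiableOn ℂ φ (ball (0:ℂ) 1))
    (hm : MapsTo φ (ball (0:ℂ) 1) (ball (0:ℂ) 1)) {r : ℝ} (hr : r < 1)
    (hb : ∀ n, ‖φ^[n] 0‖ ≤ r) : ∃ p : ℂ, ‖p‖ < 1 ∧ φ p = p := by
  have hφ : ∀ w : ℂ, ‖w‖ < 1 → ‖φ w‖ < 1 := fun w hw => by simpa using iter_lt hm 1 hw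
  have hr0 : 0 ≤ r := (norm_nonneg _).trans (hb 0)
  set z : ℕ → ℂ := fun n => φ^[n] 0 with hz
  have hz1 : ∀ n, ‖z n‖ < 1 := fun n => (hb n).trans_lt hr
  set S : Set ℝ := {C | ∃ w : ℂ, ‖w‖ < 1 ∧ ∀ᶠ n in atTop, hypD w (z n) ≤ C} with hS
  have hSne : S.Nonempty := by
    refine ⟨1 / (1 - r ^ 2), 0, by simp, Eventually.of_forall fun n => ?_⟩
    simp only [hypD, map_zero, zero_mul, sub_zero, norm_one, norm_zero]
    norm_num
    rw [← one_div, ← one_div]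
    apply one_div_le_one_div_of_le
    · nlinarith
    · have := hb n
      nlinarith [norm_nonneg (z n)]
  have hS1 : ∀ C ∈ S, 1 ≤ C := by
    rintro C ⟨w, hw, h⟩
    obtain ⟨n, hn⟩ := h.exists
    exact (hypD_ge hw (hz1 n)).trans hn
  have hbdd : BddBelow S := ⟨1, hS1⟩
  set c0 := sInf S with hc0
  have hc1 : 1 ≤ c0 := le_csInf hSne hS1
  set δ := (1 - r) ^ 2 / (c0 + 1) with hδ
  have hδ0 : 0 < δ := by
    have : 0 < 1 - r := by linarith
    positivity
  set K : Set ℂ := {w | ‖w‖ ^ 2 ≤ 1 - δ} with hK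
  have hK1 : ∀ w ∈ K, ‖w‖ < 1 := by
    intro w hw
    have : ‖w‖ ^ 2 ≤ 1 - δ := hw
    nlinarith [norm_nonneg w]
  have hKc : IsCompact K := by
    apply (isCompact_closedBall (0:ℂ) 1).of_isClosed_subset
    · exact isClosed_le (by fun_prop) (by fun_prop)
    · intro w hw
      simpa using (hK1 w hw).le
  have hKw : ∀ w : ℂ, ‖w‖ < 1 → ∀ n, hypD w (z n) ≤ c0 + 1 → w ∈ K := by
    intro w hw n h
    have h1 := one_sub_sq_pos hw
    have h2 := one_sub_sq_pos (hz1 n)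
    rw [hypD, div_le_iff₀ (by positivity)] at h
    have h3 : 1 - r ≤ ‖1 - (starRingEnd ℂ) w * z n‖ := by
      have := norm_sub_norm_le (1:ℂ) ((starRingEnd ℂ) w * z n)
      rw [norm_one, norm_mul, RCLike.norm_conj] at this
      nlinarith [norm_nonneg w, norm_nonneg (z n), hb n]
    have h4 : (1 - r) ^ 2 ≤ ‖1 - (starRingEnd ℂ) w * z n‖ ^ 2 :=
      pow_le_pow_left₀ (by linarith) h3 2
    have h5 : (1 - r) ^ 2 ≤ (c0 + 1) * (1 - ‖w‖ ^ 2) := by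
      refine h4.trans (h.trans ?_)
      apply mul_le_mul_of_nonneg_left _ (by linarith)
      nlinarith [sq_nonneg ‖z n‖]
    have h6 : δ ≤ 1 - ‖w‖ ^ 2 := by
      rw [hδ, div_le_iff₀ (by linarith)]; linarith
    show ‖w‖ ^ 2 ≤ 1 - δ
    linarith
  have hwit : ∀ C ∈ S, C < c0 + 1 → ∃ w ∈ K, ∀ᶠ n in atTop, hypD w (z n) ≤ C := by
    rintro C ⟨w, hw, h⟩ hC
    obtain ⟨n, hn⟩ := h.exists
    exact ⟨w, hKw w hw n (hn.trans hC.le), h⟩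
  obtain ⟨C1, hC1, hC1'⟩ := exists_lt_of_csInf_lt hSne (show sInf S < c0 + 1 by linarith)
  obtain ⟨w1, hw1, -⟩ := hwit C1 hC1 hC1'
  have hφc : ContinuousOn φ K := hd.continuousOn.mono fun w hw => by simpa using hK1 w hw
  have hcont : ContinuousOn (fun w => hypD w (φ w)) K := by
    unfold hypD
    apply ContinuousOn.div
    · apply ContinuousOn.pow
      apply ContinuousOn.norm
      apply continuousOn_const.sub
      exact (Complex.continuous_conj.continuousOn).mul hφc
    · apply ContinuousOn.mul
      · fun_prop
      · exact continuousOn_const.sub ((hφc.norm).pow 2)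
    · intro w hw
      exact (mul_pos (one_sub_sq_pos (hK1 w hw)) (one_sub_sq_pos (hφ w (hK1 w hw)))).ne'
  obtain ⟨w0, hw0, hmin⟩ := hKc.exists_isMinOn ⟨w1, hw1⟩ hcont
  refine ⟨w0, hK1 w0 hw0, ?_⟩
  by_contra hne
  have hgt := hypD_gt (hK1 w0 hw0) (hφ _ (hK1 w0 hw0)) (Ne.symm hne)
  set c := √(hypD w0 (φ w0)) with hc
  have hcgt : 1 < c := by rw [hc, Real.lt_sqrt (by norm_num)]; simpa using hgt
  set θ := 2 / (1 + c) with hθ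
  have hθ0 : 0 < θ := by positivity
  have hθ1 : θ < 1 := by rw [hθ, div_lt_one (by positivity)]; linarith
  have hlt : c0 < c0 / θ := by rw [lt_div_iff₀ hθ0]; nlinarith
  obtain ⟨C, hC, hC'⟩ := exists_lt_of_csInf_lt hSne
    (show sInf S < min (c0 / θ) (c0 + 1) from lt_min hlt (by linarith))
  obtain ⟨hCa, hCb⟩ := lt_min_iff.1 hC'
  obtain ⟨w, hw, hev⟩ := hwit C hC hCb
  have hwl := hK1 w hw
  obtain ⟨m, hm1, hmid⟩ := exists_midpoint hwl (hφ w hwl)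
  have hev2 : ∀ᶠ n in atTop, hypD (φ w) (z n) ≤ C := by
    rw [← Filter.map_add_atTop_eq_nat 1, eventually_map]
    filter_upwards [hev] with n hn
    have : z (n + 1) = φ (z n) := by simp [hz, Function.iterate_succ_apply']
    rw [this]
    exact (hypD_contr hd hm hwl (hz1 n)).trans hn
  have hmem : θ * C ∈ S := by
    refine ⟨m, hm1, ?_⟩
    filter_upwards [hev, hev2] with n h1 h2
    refine (hmid (z n) C (hz1 n) h1 h2).trans ?_
    apply mul_le_mul_of_nonneg_right _ (by linarith [hS1 C hC])
    apply div_le_div_of_nonneg_left (by norm_num) (by positivity)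
    have : c ≤ √(hypD w (φ w)) := Real.sqrt_le_sqrt (hmin hw)
    linarith
  have := csInf_le hbdd hmem
  rw [lt_div_iff₀ hθ0] at hCa
  linarith

/-! ### Infinite products and the case of an interior fixed point -/

lemma inf_prod (b : ℕ → ℂ → ℂ) (hd : ∀ n, DifferentiableOn ℂ (b n) (ball (0:ℂ) 1))
    (h1 : ∀ n z, ‖z‖ < 1 → ‖b n z‖ ≤ 1)
    (h2 : ∀ n z, ‖z‖ < 1 → ‖1 - b n z‖ ≤ (1 / 4) / (1 - ‖z‖) * (1 / 2) ^ n) :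
    ∃ F : ℂ → ℂ, DifferentiableOn ℂ F (ball (0:ℂ) 1) ∧ (∀ z, ‖z‖ < 1 → ‖F z‖ ≤ 1) ∧
      (∀ n z, ‖z‖ < 1 → b n z = 0 → F z = 0) ∧ F 0 ≠ 0 := by
  set P : ℕ → ℂ → ℂ := fun N z => ∏ n ∈ Finset.range N, b n z with hP
  have hP1 : ∀ N z, ‖z‖ < 1 → ‖P N z‖ ≤ 1 := by
    intro N z hz
    rw [hP, norm_prod]
    exact Finset.prod_le_one (fun _ _ => norm_nonneg _) fun n _ => h1 n z hz
  have hstep : ∀ z, ‖z‖ < 1 → ∀ N, dist (P N z) (P (N + 1) z) ≤ (1 / 4) / (1 - ‖z‖) * (1 / 2) ^ N := by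
    intro z hz N
    have : P N z - P (N + 1) z = P N z * (1 - b N z) := by
      simp only [hP, Finset.prod_range_succ]; ring
    rw [dist_eq_norm, this, norm_mul]
    have := hP1 N z hz
    have := h2 N z hz
    nlinarith [norm_nonneg (P N z), norm_nonneg (1 - b N z)]
  have hlim : ∀ z, ∃ a, ‖z‖ < 1 → Tendsto (fun N => P N z) atTop (𝓝 a) := by
    intro z
    by_cases hz : ‖z‖ < 1
    · obtain ⟨a, ha⟩ := cauchySeq_tendsto_of_complete
        (cauchySeq_of_le_geometric _ _ (by norm_num) (hstep z hz))
      exact ⟨a, fun _ => ha⟩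
    · exact ⟨0, fun h => absurd h hz⟩
  choose F hF using hlim
  have hdist : ∀ z, ‖z‖ < 1 → ∀ N, dist (P N z) (F z) ≤ (1 / 4) / (1 - ‖z‖) * (1 / 2) ^ N / (1 - 1 / 2) :=
    fun z hz N => dist_le_of_le_geometric_of_tendsto _ _ (by norm_num) (hstep z hz) (hF z hz) N
  refine ⟨F, ?_, ?_, ?_, ?_⟩
  · have hloc : TendstoLocallyUniformlyOn P F atTop (ball (0:ℂ) 1) := by
      rw [Metric.tendstoLocallyUniformlyOn_iff]
      intro ε hε x hx
      have hx : ‖x‖ < 1 := by simpa using hx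
      refine ⟨ball 0 ((1 + ‖x‖) / 2), mem_nhdsWithin_of_mem_nhds (isOpen_ball.mem_nhds ?_), ?_⟩
      · rw [mem_ball_zero_iff]; linarith
      have ht : Tendsto (fun N : ℕ => (1 / 4) / (1 - (1 + ‖x‖) / 2) * (1 / 2 : ℝ) ^ N / (1 - 1 / 2)) atTop (𝓝 0) := by
        have := tendsto_pow_atTop_nhds_zero_of_lt_one (r := (1/2 : ℝ)) (by norm_num) (by norm_num)
        simpa using (this.const_mul ((1 / 4) / (1 - (1 + ‖x‖) / 2))).div_const (1 - 1 / 2)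
      filter_upwards [ht.eventually (gt_mem_nhds hε)] with N hN y hy
      have hy' : ‖y‖ < (1 + ‖x‖) / 2 := by simpa using hy
      rw [dist_comm]
      refine lt_of_le_of_lt ((hdist y (by linarith) N).trans ?_) hN
      apply div_le_div_of_nonneg_right _ (by norm_num)
      apply mul_le_mul_of_nonneg_right _ (by positivity)
      apply div_le_div_of_nonneg_left (by norm_num) (by linarith) (by linarith)
    refine hloc.differentiableOn (Eventually.of_forall fun N => ?_) isOpen_ball
    simp only [hP]
    exact DifferentiableOn.fun_finsetProd fun n _ => hd n
  · intro z hz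
    exact le_of_tendsto (hF z hz).norm (Eventually.of_forall fun N => hP1 N z hz)
  · intro n z hz hb
    refine tendsto_nhds_unique (hF z hz) (tendsto_const_nhds.congr' ?_)
    filter_upwards [eventually_gt_atTop n] with N hN
    exact (Finset.prod_eq_zero (Finset.mem_range.2 hN) hb).symm
  · intro h
    have := hdist 0 (by simp) 0
    rw [h] at this
    simp [hP] at this
    norm_num at this

lemma norm_one_sub_prod_le {ι : Type*} (s : Finset ι) (x : ι → ℂ) (h : ∀ i ∈ s, ‖x i‖ ≤ 1) {c : ℝ}
    (hc : ∀ i ∈ s, ‖1 - x i‖ ≤ c) : ‖1 - ∏ i ∈ s, x i‖ ≤ s.card * c := by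
  induction s using Finset.induction_on with
  | empty => simp
  | insert a s ha ih =>
    rw [Finset.prod_insert ha, Finset.card_insert_of_notMem ha]
    have e : 1 - x a * ∏ i ∈ s, x i = (1 - x a) + x a * (1 - ∏ i ∈ s, x i) := by ring
    have i1 := ih (fun i hi => h i (Finset.mem_insert_of_mem hi))
      (fun i hi => hc i (Finset.mem_insert_of_mem hi))
    have i2 := h a (Finset.mem_insert_self _ _)
    have i3 := hc a (Finset.mem_insert_self _ _)
    rw [e]
    refine (norm_add_le _ _).trans ?_
    rw [norm_mul]
    push_cast
    nlinarith [norm_nonneg (x a), norm_nonneg (1 - ∏ i ∈ s, x i)]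

def bl (a w : ℂ) : ℂ := (starRingEnd ℂ) a * mob a w

lemma bl_le {a w : ℂ} (ha : ‖a‖ < 1) (hw : ‖w‖ < 1) : ‖bl a w‖ ≤ 1 := by
  rw [bl, norm_mul, RCLike.norm_conj]
  nlinarith [mob_lt ha hw, norm_nonneg a, norm_nonneg (mob a w)]

lemma bl_near {a w : ℂ} (ha : ‖a‖ < 1) (hw : ‖w‖ < 1) :
    ‖1 - bl a w‖ ≤ (1 - ‖a‖ ^ 2) / (1 - ‖w‖) := by
  have h := den_ne ha hw.le
  have e : 1 - bl a w = ((1 - ‖a‖ ^ 2 : ℝ) : ℂ) / (1 - (starRingEnd ℂ) a * w) := by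
    rw [bl, mob, eq_div_iff h, sub_mul, mul_assoc, div_mul_cancel₀ _ h]
    have : (starRingEnd ℂ) a * a = ((‖a‖ ^ 2 : ℝ) : ℂ) := by
      rw [mul_comm, Complex.mul_conj, Complex.normSq_eq_norm_sq]
    push_cast at this ⊢
    linear_combination -this
  rw [e, norm_div, Complex.norm_real, Real.norm_of_nonneg (one_sub_sq_pos ha).le]
  apply div_le_div_of_nonneg_left (one_sub_sq_pos ha).le (by linarith)
  have := norm_sub_norm_le (1:ℂ) ((starRingEnd ℂ) a * w)
  rw [norm_one, norm_mul, RCLike.norm_conj] at this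
  nlinarith [norm_nonneg w, norm_nonneg a]

lemma iter_zero {φ : ℂ → ℂ} (h0 : φ 0 = 0) (n : ℕ) : φ^[n] 0 = 0 :=
  Function.iterate_fixed h0 n

lemma exists_blaschke {φ : ℂ → ℂ} (hd : DifferentiableOn ℂ φ (ball (0:ℂ) 1))
    (hm : MapsTo φ (ball (0:ℂ) 1) (ball (0:ℂ) 1)) (h0 : φ 0 = 0)
    (hs : ∀ n : ℕ, ∀ r < (1:ℝ), ∃ z : ℂ, ‖z‖ < 1 ∧ r < ‖φ^[n] z‖) :
    ∃ F : ℂ → ℂ, IsHInf F ∧ F 0 ≠ 0 ∧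
      ∀ n : ℕ, ∃ z : ℂ, ‖z‖ < 1 ∧ ∀ m ∈ Finset.Icc 1 n, F (φ^[m] z) = 0 := by
  set e : ℕ → ℝ := fun n => (1 / 8) * (1 / 2) ^ n / (n + 1) with he
  have he0 : ∀ n, 0 < e n := fun n => by simp only [he]; positivity
  choose z hz hzr using fun n => hs n (1 - e n) (by linarith [he0 n])
  have hlow : ∀ n, ∀ m ∈ Finset.Icc 1 n, 1 - e n < ‖φ^[m] (z n)‖ := by
    intro n m hmn
    obtain ⟨-, hmn⟩ := Finset.mem_Icc.1 hmn
    refine (hzr n).trans_le ?_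
    obtain ⟨k, rfl⟩ := Nat.exists_eq_add_of_le hmn
    rw [add_comm m k, Function.iterate_add_apply]
    exact schwarz0 (iter_diff hd hm k) (hm.iterate k) (iter_zero h0 k) (iter_lt hm m (hz _))
  have hinf := inf_prod (fun n w => ∏ m ∈ Finset.Icc 1 n, bl (φ^[m] (z n)) w)
  specialize hinf ?_ ?_ ?_
  · intro n
    exact DifferentiableOn.fun_finsetProd fun m _ =>
      (mob_diff (iter_lt hm m (hz n))).const_mul _
  · intro n w hw
    rw [norm_prod]
    exact Finset.prod_le_one (fun _ _ => norm_nonneg _) fun m _ => bl_le (iter_lt hm m (hz n)) hw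
  · intro n w hw
    have hw' : 0 < 1 - ‖w‖ := by linarith
    refine (norm_one_sub_prod_le (c := 2 * e n / (1 - ‖w‖)) _ _
      (fun m _ => bl_le (iter_lt hm m (hz n)) hw) ?_).trans ?_
    · intro m hmn
      refine (bl_near (iter_lt hm m (hz n)) hw).trans ?_
      apply div_le_div_of_nonneg_right _ hw'.le
      have := hlow n m hmn
      have := iter_lt hm m (hz n)
      nlinarith [norm_nonneg (φ^[m] (z n))]
    · rw [Nat.card_Icc, Nat.add_sub_cancel]
      simp only [he]
      have : (n : ℝ) * (2 * (1 / 8 * (1 / 2) ^ n / (n + 1)) / (1 - ‖w‖))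
        = (1 / 4 / (1 - ‖w‖) * (1 / 2) ^ n) * (n / (n + 1)) := by
        field_simp; ring
      rw [this]
      apply mul_le_of_le_one_right (by positivity)
      rw [div_le_one (by positivity)]
      linarith
  obtain ⟨F, hF1, hF2, hF3, hF4⟩ := hinf
  refine ⟨F, ⟨hF1, 1, fun w hw => hF2 w (by simpa using hw)⟩, hF4, fun n => ⟨z n, hz n, ?_⟩⟩
  intro m hmn
  apply hF3 n _ (iter_lt hm m (hz n))
  exact Finset.prod_eq_zero hmn (by simp [bl, mob_self])

lemma cesaro_diff {φ f : ℂ → ℂ} (hd : DifferentiableOn ℂ φ (ball (0:ℂ) 1))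
    (hm : MapsTo φ (ball (0:ℂ) 1) (ball (0:ℂ) 1)) (hf : DifferentiableOn ℂ f (ball (0:ℂ) 1)) (n : ℕ) :
    DifferentiableOn ℂ (cesaro φ f n) (ball (0:ℂ) 1) := by
  unfold cesaro
  apply DifferentiableOn.const_mul
  exact DifferentiableOn.fun_sum fun m _ => hf.comp (iter_diff hd hm m) (hm.iterate m)

lemma sum_tel (a : ℕ → ℂ) (n : ℕ) :
    ∑ m ∈ Finset.Icc 1 n, a (m + 1) - ∑ m ∈ Finset.Icc 1 n, a m = a (n + 1) - a 1 := by
  induction n with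
  | zero => simp
  | succ n ih =>
    rw [Finset.sum_Icc_succ_top (by omega), Finset.sum_Icc_succ_top (by omega)]
    linear_combination ih

lemma limit_inv {φ f g : ℂ → ℂ} 
    (hm : MapsTo φ (ball (0:ℂ) 1) (ball (0:ℂ) 1)) (hf : IsHInf f)
    (hg : TendstoUniformlyOn (cesaro φ f) g atTop (ball (0:ℂ) 1)) {z : ℂ} (hz : ‖z‖ < 1) :
    g (φ z) = g z := by
  obtain ⟨-, M, hM⟩ := hf
  have hzb : z ∈ ball (0:ℂ) 1 := by simpa using hz
  have t1 := hg.tendsto_at (hm hzb)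
  have t2 := hg.tendsto_at hzb
  have t3 := t1.sub t2
  have t4 : Tendsto (fun n => cesaro φ f n (φ z) - cesaro φ f n z) atTop (𝓝 0) := by
    have e : ∀ n, cesaro φ f n (φ z) - cesaro φ f n z
        = (n : ℂ)⁻¹ * (f (φ^[n + 1] z) - f (φ z)) := by
      intro n
      have := sum_tel (fun m => f (φ^[m] z)) n
      simp only [Function.iterate_one] at this
      rw [← this, cesaro, cesaro, mul_sub]
      simp only [Function.iterate_succ_apply]
    simp only [e]
    have hb : ∀ n : ℕ, ‖(n : ℂ)⁻¹ * (f (φ^[n + 1] z) - f (φ z))‖ ≤ (n : ℝ)⁻¹ * (M + M) := by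
      intro n
      rw [norm_mul, norm_inv, Complex.norm_natCast]
      apply mul_le_mul_of_nonneg_left _ (by positivity)
      refine (norm_sub_le _ _).trans (add_le_add (hM _ (hm.iterate (n + 1) hzb)) (hM _ (hm hzb)))
    refine squeeze_zero_norm hb ?_
    simpa using (tendsto_inv_atTop_nhds_zero_nat (𝕜 := ℝ)).mul_const (M + M)
  exact sub_eq_zero.1 (tendsto_nhds_unique t3 t4)

lemma const_of_inv {φ g : ℂ → ℂ} (hd : DifferentiableOn ℂ φ (ball (0:ℂ) 1))
    (h0 : φ 0 = 0)
    (hg : DifferentiableOn ℂ g (ball (0:ℂ) 1)) (hinv : ∀ z, ‖z‖ < 1 → g (φ z) = g z)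
    (hl : ∀ k : ℕ, 0 < k → deriv φ 0 ^ k ≠ 1) {z : ℂ} (hz : ‖z‖ < 1) : g z = g 0 := by
  have h0b : (0:ℂ) ∈ ball (0:ℂ) 1 := by simp
  have hna : AnalyticOnNhd ℂ g (ball (0:ℂ) 1) := hg.analyticOnNhd isOpen_ball
  have hev : g =ᶠ[𝓝 0] fun _ => g 0 := by
    by_contra hne
    have hA : AnalyticAt ℂ (fun z => g z - g 0) 0 := (hna 0 h0b).sub analyticAt_const
    have hne' : ¬ ∀ᶠ z in 𝓝 (0:ℂ), g z - g 0 = 0 := by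
      intro h
      exact hne (h.mono fun z hz => sub_eq_zero.1 hz)
    obtain ⟨k, h, hh, hh0, hev⟩ := hA.exists_eventuallyEq_pow_smul_nonzero_iff.2 hne'
    have hk : 0 < k := by
      rcases Nat.eq_zero_or_pos k with rfl | hk
      · have := hev.self_of_nhds
        simp at this
        exact absurd this.symm hh0
      · exact hk
    have hφat : DifferentiableAt ℂ φ 0 := hd.differentiableAt (isOpen_ball.mem_nhds h0b)
    have hφc : Tendsto φ (𝓝 0) (𝓝 0) := by simpa [h0] using hφat.continuousAt.tendsto
    have hev2 := hφc.eventually hev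
    have hsl : Tendsto (fun z => φ z / z) (𝓝[≠] 0) (𝓝 (deriv φ 0)) := by
      have := hasDerivAt_iff_tendsto_slope.1 hφat.hasDerivAt
      refine this.congr fun z => ?_
      simp [slope_def_field, h0]
    have t1 : Tendsto (fun z => (φ z / z) ^ k * h (φ z)) (𝓝[≠] 0) (𝓝 (deriv φ 0 ^ k * h 0)) := by
      refine (hsl.pow k).mul ?_
      exact (hh.continuousAt.tendsto.comp hφc).mono_left nhdsWithin_le_nhds
    have t2 : Tendsto h (𝓝[≠] 0) (𝓝 (h 0)) :=
      hh.continuousAt.tendsto.mono_left nhdsWithin_le_nhds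
    have t3 : (fun z => (φ z / z) ^ k * h (φ z)) =ᶠ[𝓝[≠] 0] h := by
      filter_upwards [nhdsWithin_le_nhds hev, nhdsWithin_le_nhds hev2, self_mem_nhdsWithin,
        nhdsWithin_le_nhds (isOpen_ball.mem_nhds h0b)] with z a1 a2 a3 a4
      have a3 : z ≠ 0 := a3
      rw [hinv z (by simpa using a4), a1] at a2
      simp only [sub_zero, smul_eq_mul] at a2
      rw [div_pow, div_mul_eq_mul_div, div_eq_iff (pow_ne_zero _ a3), ← a2, mul_comm]
    have := tendsto_nhds_unique (t1.congr' t3) t2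
    exact hl k hk (mul_right_cancel₀ hh0 (by rw [this, one_mul]))
  exact hna.eqOn_of_preconnected_of_eventuallyEq analyticOnNhd_const
    (convex_ball (0:ℂ) 1).isPreconnected h0b hev (by simpa using hz)

lemma deriv_iter_zero {φ : ℂ → ℂ} (hd : DifferentiableAt ℂ φ 0) (h0 : φ 0 = 0) (n : ℕ) :
    deriv (φ^[n]) 0 = deriv φ 0 ^ n := by
  have := HasDerivAt.iterate (x := (0:ℂ)) hd.hasDerivAt h0 n
  exact this.deriv

lemma unif_zero_of_iter {φ : ℂ → ℂ} (hd : DifferentiableOn ℂ φ (ball (0:ℂ) 1))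
    (hm : MapsTo φ (ball (0:ℂ) 1) (ball (0:ℂ) 1)) (h0 : φ 0 = 0) {n : ℕ} {r : ℝ} (hr : r < 1)
    (hn : ∀ z : ℂ, ‖z‖ < 1 → ‖φ^[n] z‖ ≤ r) :
    TendstoUniformlyOn (fun (n : ℕ) (z : ℂ) => φ^[n] z) (fun _ => 0) atTop (ball (0:ℂ) 1) := by
  have hr0 : 0 ≤ r := (norm_nonneg _).trans (hn 0 (by simp))
  have hstep : ∀ z : ℂ, ‖z‖ < 1 → ‖φ^[n] z‖ ≤ r * ‖z‖ := by
    intro z hz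
    have hz0 : φ^[n] 0 = 0 := iter_zero h0 n
    have := Complex.dist_le_div_mul_dist_of_mapsTo_ball (f := φ^[n]) (c := 0) (R₁ := 1) (R₂ := r) (z := z)
      (iter_diff hd hm n)
      (fun w hw => by rw [hz0]; simpa using hn w (by simpa using hw)) (by simpa using hz)
    rw [hz0] at this
    simpa using this
  have hk : ∀ k : ℕ, ∀ z : ℂ, ‖z‖ < 1 → ‖φ^[n * k] z‖ ≤ r ^ k := by
    intro k
    induction k with
    | zero => intro z hz; simpa using hz.le
    | succ k ih =>
      intro z hz
      rw [Nat.mul_succ, add_comm, Function.iterate_add_apply]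
      refine (hstep _ (iter_lt hm _ hz)).trans ?_
      rw [pow_succ']
      exact mul_le_mul_of_nonneg_left (ih z hz) hr0
  rw [Metric.tendstoUniformlyOn_iff]
  intro ε hε
  obtain ⟨k, hk'⟩ := exists_pow_lt_of_lt_one hε hr
  filter_upwards [eventually_ge_atTop (n * k)] with N hN z hz
  have hz' : ‖z‖ < 1 := by simpa using hz
  rw [dist_zero_left]
  obtain ⟨j, rfl⟩ := Nat.exists_eq_add_of_le hN
  rw [add_comm, Function.iterate_add_apply]
  refine lt_of_le_of_lt ((schwarz0 (iter_diff hd hm j) (hm.iterate j) (iter_zero h0 j)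
    (iter_lt hm _ hz')).trans (hk k z hz')) hk'

lemma fix_zero {φ : ℂ → ℂ} (hd : DifferentiableOn ℂ φ (ball (0:ℂ) 1))
    (hm : MapsTo φ (ball (0:ℂ) 1) (ball (0:ℂ) 1)) (h0 : φ 0 = 0) (hme : MeanErgodicHInf φ) :
    TendstoUniformlyOn (fun (n : ℕ) (z : ℂ) => φ^[n] z) (fun _ => 0) atTop (ball (0:ℂ) 1) ∨
    ∃ k : ℕ, 0 < k ∧ ∀ z ∈ ball (0:ℂ) 1, φ^[k] z = z := by
  have h0b : (0:ℂ) ∈ ball (0:ℂ) 1 := by simp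
  have hφat : DifferentiableAt ℂ φ 0 := hd.differentiableAt (isOpen_ball.mem_nhds h0b)
  by_cases hs : ∀ n : ℕ, ∀ r < (1:ℝ), ∃ z : ℂ, ‖z‖ < 1 ∧ r < ‖φ^[n] z‖
  swap
  · left
    push Not at hs
    obtain ⟨n, r, hr, hn⟩ := hs
    exact unif_zero_of_iter hd hm h0 hr hn
  right
  by_cases hl : ∀ k : ℕ, 0 < k → deriv φ 0 ^ k ≠ 1
  swap
  · push Not at hl
    obtain ⟨k, hk, hk1⟩ := hl
    refine ⟨k, hk, ?_⟩
    have hz0 : φ^[k] 0 = 0 := iter_zero h0 k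
    have hds : dslope (φ^[k]) 0 0 = 1 := by rw [dslope_same, deriv_iter_zero hφat h0, hk1]
    have := Complex.affine_of_mapsTo_ball_of_norm_dslope_eq_div (f := φ^[k]) (c := 0) (R₁ := 1)
      (R₂ := 1) (z₀ := 0) (iter_diff hd hm k)
      (by rw [hz0]; exact (hm.iterate k).mono_right ball_subset_closedBall) h0b
      (by rw [hds]; norm_num)
    intro z hz
    have := this hz
    rw [this]
    simp only [hds, hz0]
    simp
  exfalso
  obtain ⟨F, hF, hF0, hblk⟩ := exists_blaschke hd hm h0 hs
  obtain ⟨g, hg⟩ := hme F hF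
  have hgd : DifferentiableOn ℂ g (ball (0:ℂ) 1) :=
    hg.tendstoLocallyUniformlyOn.differentiableOn
      (Eventually.of_forall fun n => cesaro_diff hd hm hF.1 n) isOpen_ball
  have hconst : ∀ z : ℂ, ‖z‖ < 1 → g z = g 0 := fun z hz =>
    const_of_inv hd h0 hgd (fun z hz => limit_inv hm hF hg hz) hl hz
  have hg0 : g 0 = F 0 := by
    refine tendsto_nhds_unique (hg.tendsto_at h0b) (tendsto_const_nhds.congr' ?_)
    filter_upwards [eventually_gt_atTop 0] with n hn
    have : (n : ℂ) ≠ 0 := by exact_mod_cast hn.ne'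
    simp [cesaro, iter_zero h0, this]
  rw [Metric.tendstoUniformlyOn_iff] at hg
  obtain ⟨n, hn⟩ := (hg ‖F 0‖ (norm_pos_iff.2 hF0)).exists
  obtain ⟨z, hz, hzF⟩ := hblk n
  have := hn z (by simpa using hz)
  rw [hconst z hz, hg0, cesaro, Finset.sum_eq_zero hzF, mul_zero, dist_zero_right] at this
  exact lt_irrefl _ this

/-! ### No interior fixed point -/

lemma norm_exp_bd {t : ℝ} (ht : t ∈ Icc (0:ℝ) 1) {L : ℂ} {b : ℝ} (hb : |L.im| ≤ b) :
    ‖Complex.exp (I * t * L)‖ ≤ Real.exp b ∧ Real.exp (-b) ≤ ‖Complex.exp (I * t * L)‖ := by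
  rw [Complex.norm_exp]
  have e : (I * t * L).re = - (t * L.im) := by
    simp [Complex.mul_re, Complex.mul_im]
  rw [e]
  have h1 : |t * L.im| ≤ b := by
    rw [abs_mul, abs_of_nonneg ht.1]
    nlinarith [ht.1, ht.2, abs_nonneg L.im]
  obtain ⟨h2, h3⟩ := abs_le.1 h1
  exact ⟨Real.exp_le_exp.2 (by linarith), Real.exp_le_exp.2 (by linarith)⟩

lemma osc (L : ℕ → ℂ) (hIm : ∀ k, |(L k).im| ≤ Real.pi)
    (hRe : Tendsto (fun k => (L k).re) atTop atTop) :
    ¬ ∀ t ∈ Icc (0:ℝ) 1, ∃ c : ℂ, Tendsto (fun k => Complex.exp (I * t * L k)) atTop (𝓝 c) := by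
  intro h
  have hj : ∀ k : ℕ, ∃ j : ℕ, k ≤ j ∧ (L k).re + (k + 1) ≤ (L j).re := by
    intro k
    exact ((eventually_ge_atTop k).and (hRe.eventually (eventually_ge_atTop _))).exists
  choose j hjk hjr using hj
  have hjt : Tendsto j atTop atTop := tendsto_atTop_mono hjk tendsto_id
  set D : ℕ → ℂ := fun k => L (j k) - L k with hD
  have hDre : ∀ k : ℕ, (k + 1 : ℝ) ≤ ‖D k‖ := by
    intro k
    refine le_trans ?_ ((le_abs_self _).trans (Complex.abs_re_le_norm _))
    simp only [hD, Complex.sub_re]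
    linarith [hjr k]
  have hDim : ∀ k, |(D k).im| ≤ 2 * Real.pi := by
    intro k
    simp only [hD, Complex.sub_im]
    refine (abs_sub _ _).trans ?_
    linarith [hIm (j k), hIm k]
  have hone : ∀ t ∈ Icc (0:ℝ) 1, Tendsto (fun k => Complex.exp (I * t * D k)) atTop (𝓝 1) := by
    intro t ht
    obtain ⟨c, hc⟩ := h t ht
    have hc0 : c ≠ 0 := by
      have : Real.exp (-Real.pi) ≤ ‖c‖ :=
        ge_of_tendsto hc.norm (Eventually.of_forall fun k => (norm_exp_bd ht (hIm k)).2)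
      exact norm_pos_iff.1 ((Real.exp_pos _).trans_le this)
    have := (hc.comp hjt).div hc hc0
    rw [div_self hc0] at this
    refine this.congr fun k => ?_
    simp only [hD, mul_sub, Complex.exp_sub, Function.comp, Pi.div_apply]
  have hI1 : Tendsto (fun k => ∫ t in (0:ℝ)..1, Complex.exp (I * t * D k)) atTop
      (𝓝 (∫ _t in (0:ℝ)..1, (1:ℂ))) := by
    apply intervalIntegral.tendsto_integral_filter_of_dominated_convergence
      (fun _ => Real.exp (2 * Real.pi))
    · refine Eventually.of_forall fun k => ?_
      exact Continuous.aestronglyMeasurable (by fun_prop)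
    · refine Eventually.of_forall fun k => MeasureTheory.ae_of_all _ fun t ht => ?_
      rw [uIoc_of_le zero_le_one] at ht
      exact (norm_exp_bd ⟨ht.1.le, ht.2⟩ (hDim k)).1
    · exact intervalIntegrable_const
    · refine MeasureTheory.ae_of_all _ fun t ht => ?_
      rw [uIoc_of_le zero_le_one] at ht
      exact hone t ⟨ht.1.le, ht.2⟩
  have hI2 : Tendsto (fun k => ∫ t in (0:ℝ)..1, Complex.exp (I * t * D k)) atTop (𝓝 0) := by
    have hb : ∀ k : ℕ, ‖∫ t in (0:ℝ)..1, Complex.exp (I * t * D k)‖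
        ≤ (Real.exp (2 * Real.pi) + 1) * (1 / ((k:ℝ) + 1)) := by
      intro k
      have hk : (0:ℝ) < k + 1 := by positivity
      have hD0 : D k ≠ 0 := norm_pos_iff.1 (hk.trans_le (hDre k))
      have e : (fun t : ℝ => Complex.exp (I * t * D k)) = fun t : ℝ => Complex.exp ((I * D k) * t) := by
        funext t; congr 1; ring
      rw [e, integral_exp_mul_complex (mul_ne_zero I_ne_zero hD0), norm_div, norm_mul, norm_I, one_mul,
        mul_one_div]
      apply div_le_div₀ (by positivity) _ hk (hDre k)
      refine (norm_sub_le _ _).trans ?_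
      have := (norm_exp_bd (t := 1) (by simp) (hDim k)).1
      simp only [Complex.ofReal_one, mul_one, Complex.ofReal_zero, mul_zero, Complex.exp_zero,
        norm_one] at this ⊢
      linarith
    refine squeeze_zero_norm hb ?_
    simpa using tendsto_one_div_add_atTop_nhds_zero_nat.const_mul (Real.exp (2 * Real.pi) + 1)
  have := tendsto_nhds_unique hI1 hI2
  simp at this

/-- The function `1 + log (2 / (1 - conj ω z))`. -/
def UU (ω z : ℂ) : ℂ := 1 + Real.log 2 - Complex.log (1 - (starRingEnd ℂ) ω * z)

lemma ww_re {ω z : ℂ} (hω : ‖ω‖ = 1) (hz : ‖z‖ < 1) : 0 < (1 - (starRingEnd ℂ) ω * z).re := by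
  have h1 : ‖(starRingEnd ℂ) ω * z‖ < 1 := by
    rw [norm_mul, RCLike.norm_conj, hω, one_mul]; exact hz
  have h2 := Complex.re_le_norm ((starRingEnd ℂ) ω * z)
  rw [Complex.sub_re, Complex.one_re]
  linarith

lemma ww_ne {ω z : ℂ} (hω : ‖ω‖ = 1) (hz : ‖z‖ < 1) : 1 - (starRingEnd ℂ) ω * z ≠ 0 := by
  intro h
  have := ww_re hω hz
  rw [h] at this
  simp at this

lemma UU_re (ω z : ℂ) : (UU ω z).re = 1 + Real.log 2 - Real.log ‖1 - (starRingEnd ℂ) ω * z‖ := by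
  simp only [UU, Complex.sub_re, Complex.add_re, Complex.one_re, Complex.ofReal_re, Complex.log_re]

lemma UU_re_ge {ω z : ℂ} (hω : ‖ω‖ = 1) (hz : ‖z‖ < 1) : 1 ≤ (UU ω z).re := by
  rw [UU_re]
  have h1 : ‖1 - (starRingEnd ℂ) ω * z‖ ≤ 2 := by
    refine (norm_sub_le _ _).trans ?_
    rw [norm_one, norm_mul, RCLike.norm_conj, hω, one_mul]; linarith
  have := Real.log_le_log (norm_pos_iff.2 (ww_ne hω hz)) h1
  linarith

lemma UU_diff {ω : ℂ} (hω : ‖ω‖ = 1) {z : ℂ} (hz : ‖z‖ < 1) : DifferentiableAt ℂ (UU ω) z := by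
  unfold UU
  apply DifferentiableAt.const_sub
  apply DifferentiableAt.clog
  · fun_prop
  · exact Or.inl (ww_re hω hz)

lemma ff_hinf {ω : ℂ} (hω : ‖ω‖ = 1) {t : ℝ} (ht : t ∈ Icc (0:ℝ) 1) :
    IsHInf (fun z => Complex.exp (I * t * Complex.log (UU ω z))) := by
  constructor
  · intro z hz
    have hz' : ‖z‖ < 1 := by simpa using hz
    apply DifferentiableAt.differentiableWithinAt
    apply DifferentiableAt.cexp
    apply DifferentiableAt.const_mul
    apply (UU_diff hω hz').clog
    exact Or.inl (by linarith [UU_re_ge hω hz'])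
  · refine ⟨Real.exp Real.pi, fun z hz => (norm_exp_bd ht ?_).1⟩
    rw [Complex.log_im]; exact Complex.abs_arg_le_pi _

lemma log_lip {a b : ℂ} {R : ℝ} (hR : 0 < R) (ha : R < a.re) (hb : R < b.re) :
    ‖Complex.log a - Complex.log b‖ ≤ 1 / R * ‖a - b‖ := by
  have hconv : Convex ℝ {c : ℂ | R < c.re} := convex_halfSpace_re_gt R
  refine hconv.norm_image_sub_le_of_norm_hasDerivWithin_le (f := Complex.log) (f' := fun c => c⁻¹)
    ?_ ?_ hb ha
  · intro x hx
    have hx : R < x.re := hx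
    exact (Complex.hasDerivAt_log (Or.inl (by linarith))).hasDerivWithinAt
  · intro x hx
    have hx : R < x.re := hx
    rw [norm_inv, ← one_div]
    exact one_div_le_one_div_of_le hR (hx.le.trans (Complex.re_le_norm x))

lemma UU_step {ω y y' : ℂ} {r : ℝ} (hω : ‖ω‖ = 1) (hy : ‖y‖ < 1) (hy' : ‖y'‖ < 1)
    (hr0 : 0 ≤ r) (hr : r < 1) (h1 : ‖mob y y'‖ ≤ r) (h2 : ‖mob y' y‖ ≤ r) :
    ‖UU ω y' - UU ω y‖ ≤ Real.log (1 + 2 / (1 - r)) + 2 * Real.pi := by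
  have hC : 0 < 2 / (1 - r) := div_pos (by norm_num) (by linarith)
  have aux : ∀ a b : ℂ, ‖a‖ < 1 → ‖b‖ < 1 → ‖mob a b‖ ≤ r →
      Real.log ‖1 - (starRingEnd ℂ) ω * b‖ ≤
        Real.log (1 + 2 / (1 - r)) + Real.log ‖1 - (starRingEnd ℂ) ω * a‖ := by
    intro a b ha hb hab
    have k1 := rho_bound ha hb hr0 hr hab
    have k2 : 1 - ‖a‖ ≤ ‖1 - (starRingEnd ℂ) ω * a‖ := by
      have := norm_sub_norm_le (1:ℂ) ((starRingEnd ℂ) ω * a)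
      rw [norm_one, norm_mul, RCLike.norm_conj, hω, one_mul] at this
      exact this
    have k3 : ‖1 - (starRingEnd ℂ) ω * b‖ ≤ (1 + 2 / (1 - r)) * ‖1 - (starRingEnd ℂ) ω * a‖ := by
      have e : 1 - (starRingEnd ℂ) ω * b = (1 - (starRingEnd ℂ) ω * a) + (starRingEnd ℂ) ω * (a - b) := by
        ring
      rw [e]
      refine (norm_add_le _ _).trans ?_
      rw [norm_mul, RCLike.norm_conj, hω, one_mul, add_mul, one_mul]
      have := mul_le_mul_of_nonneg_left k2 hC.le
      linarith
    have pa := norm_pos_iff.2 (ww_ne hω ha)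
    have pb := norm_pos_iff.2 (ww_ne hω hb)
    rw [← Real.log_mul (by positivity) pa.ne']
    exact Real.log_le_log pb k3
  have a1 := aux y y' hy hy' h1
  have a2 := aux y' y hy' hy h2
  refine (Complex.norm_le_abs_re_add_abs_im _).trans (add_le_add ?_ ?_)
  · rw [Complex.sub_re, UU_re, UU_re, abs_le]
    constructor <;> linarith
  · simp only [UU, Complex.sub_im, Complex.add_im, Complex.one_im, Complex.ofReal_im, Complex.log_im]
    have b1 := abs_le.1 (Complex.abs_arg_le_pi (1 - (starRingEnd ℂ) ω * y))
    have b2 := abs_le.1 (Complex.abs_arg_le_pi (1 - (starRingEnd ℂ) ω * y'))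
    rw [abs_le]
    constructor <;> linarith [b1.1, b1.2, b2.1, b2.2]

lemma not_me_of_unbounded {φ : ℂ → ℂ} (hd : DifferentiableOn ℂ φ (ball (0:ℂ) 1))
    (hm : MapsTo φ (ball (0:ℂ) 1) (ball (0:ℂ) 1)) (hub : ∀ r < (1:ℝ), ∃ n, r < ‖φ^[n] 0‖)
    (hme : MeanErgodicHInf φ) : False := by
  have h0l : ‖(0:ℂ)‖ < 1 := by simp
  -- a subsequence of the orbit converging to a boundary point
  choose n0 hn0 using fun k : ℕ => hub (1 - 1 / ((k:ℝ) + 1)) (by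
    have : (0:ℝ) < 1 / ((k:ℝ) + 1) := by positivity
    linarith)
  obtain ⟨ω, -, σ, hσ, hlim⟩ := (isCompact_closedBall (0:ℂ) 1).tendsto_subseq
    (x := fun k => φ^[n0 k] 0) (fun k => by simpa using (iter_lt hm (n0 k) h0l).le)
  set N : ℕ → ℕ := n0 ∘ σ with hN
  set y : ℕ → ℂ := fun k => φ^[N k] 0 with hy
  have hyl : ∀ k, ‖y k‖ < 1 := fun k => iter_lt hm _ h0l
  have hylim : Tendsto y atTop (𝓝 ω) := hlim
  have hω : ‖ω‖ = 1 := by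
    have t1 : Tendsto (fun k => ‖y k‖) atTop (𝓝 ‖ω‖) := hylim.norm
    apply le_antisymm
    · exact le_of_tendsto t1 (Eventually.of_forall fun k => (hyl k).le)
    · have t2 : Tendsto (fun k : ℕ => 1 - 1 / (((σ k : ℕ):ℝ) + 1)) atTop (𝓝 (1 - 0)) :=
        (tendsto_one_div_add_atTop_nhds_zero_nat.comp hσ.tendsto_atTop).const_sub 1
      rw [sub_zero] at t2
      exact le_of_tendsto_of_tendsto t2 t1 (Eventually.of_forall fun k => (hn0 (σ k)).le)
  -- Re U tends to infinity
  have hU : Tendsto (fun k => (UU ω (y k)).re) atTop atTop := by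
    simp only [UU_re]
    have t1 : Tendsto (fun k => ‖1 - (starRingEnd ℂ) ω * y k‖) atTop (𝓝[≠] 0) := by
      apply tendsto_nhdsWithin_of_tendsto_nhds_of_eventually_within
      · have := ((hylim.const_mul ((starRingEnd ℂ) ω)).const_sub 1).norm
        have e : (starRingEnd ℂ) ω * ω = 1 := by
          rw [mul_comm, Complex.mul_conj, Complex.normSq_eq_norm_sq, hω]; simp
        rw [e] at this
        simpa using this
      · exact Eventually.of_forall fun k => (norm_pos_iff.2 (ww_ne hω (hyl k))).ne'
    have t2 := Real.tendsto_log_nhdsNE_zero.comp t1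
    simp only [sub_eq_add_neg]
    exact tendsto_atTop_add_const_left _ _ (tendsto_neg_atBot_atTop.comp t2)
  -- slow variation
  have hslow : ∀ m : ℕ, Tendsto (fun k => Complex.log (UU ω (φ^[m] (y k))) - Complex.log (UU ω (y k)))
      atTop (𝓝 0) := by
    intro m
    set r := ‖φ^[m] 0‖ with hr
    have hr1 : r < 1 := iter_lt hm m h0l
    set C := Real.log (1 + 2 / (1 - r)) + 2 * Real.pi with hC
    have hstep : ∀ k, ‖UU ω (φ^[m] (y k)) - UU ω (y k)‖ ≤ C := by
      intro k
      have e : φ^[m] (y k) = φ^[N k] (φ^[m] 0) := by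
        simp only [hy]
        rw [← Function.iterate_add_apply, ← Function.iterate_add_apply, add_comm]
      apply UU_step hω (hyl k) (iter_lt hm m (hyl k)) (norm_nonneg _) hr1
      · rw [e]
        refine (schwarz_pick (iter_diff hd hm (N k)) (hm.iterate _) h0l hr1).trans ?_
        simp [mob, hr]
      · rw [e]
        refine (schwarz_pick (iter_diff hd hm (N k)) (hm.iterate _) hr1 h0l).trans ?_
        simp [mob, hr]
    have hC0 : 0 ≤ C := (norm_nonneg _).trans (hstep 0)
    rw [Metric.tendsto_nhds]
    intro ε hε
    have hR0 : 0 < (C + 1) / ε := by positivity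
    filter_upwards [hU.eventually (eventually_gt_atTop ((C + 1) / ε + C))] with k hk
    have h1 := hstep k
    have h2 : |(UU ω (φ^[m] (y k)) - UU ω (y k)).re| ≤ C := (Complex.abs_re_le_norm _).trans h1
    rw [Complex.sub_re] at h2
    have h3 := (abs_le.1 h2).1
    rw [dist_zero_right]
    refine (log_lip hR0 (by linarith) (by linarith)).trans_lt ?_
    rw [one_div_div]
    refine (mul_le_mul_of_nonneg_left h1 (by positivity)).trans_lt ?_
    rw [div_mul_eq_mul_div, div_lt_iff₀ (by positivity)]
    nlinarith
  refine osc (fun k => Complex.log (UU ω (y k))) ?_ ?_ ?_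
  · intro k
    rw [Complex.log_im]; exact Complex.abs_arg_le_pi _
  · simp only [Complex.log_re]
    apply Real.tendsto_log_atTop.comp
    exact tendsto_atTop_mono (fun k => Complex.re_le_norm _) hU
  intro t ht
  set f : ℂ → ℂ := fun z => Complex.exp (I * t * Complex.log (UU ω z)) with hf
  have hfH : IsHInf f := ff_hinf hω ht
  obtain ⟨g, hg⟩ := hme f hfH
  have hginv : ∀ n, g (φ^[n] 0) = g 0 := by
    intro n
    induction n with
    | zero => rfl
    | succ n ih => rw [Function.iterate_succ_apply', limit_inv hm hfH hg (iter_lt hm n h0l), ih]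
  have hfd : ∀ m : ℕ, Tendsto (fun k => f (φ^[m] (y k)) - f (y k)) atTop (𝓝 0) := by
    intro m
    have t1 := ((hslow m).const_mul (I * t)).cexp
    rw [mul_zero, Complex.exp_zero] at t1
    have t2 := (t1.sub_const 1).norm.const_mul (Real.exp Real.pi)
    rw [sub_self, norm_zero, mul_zero] at t2
    refine squeeze_zero_norm (fun k => ?_) t2
    have e : f (φ^[m] (y k)) - f (y k) = f (y k) * (Complex.exp (I * t *
        (Complex.log (UU ω (φ^[m] (y k))) - Complex.log (UU ω (y k)))) - 1) := by
      simp only [hf]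
      rw [mul_sub, mul_one, ← Complex.exp_add]
      congr 2
      ring
    rw [e, norm_mul]
    apply mul_le_mul_of_nonneg_right _ (norm_nonneg _)
    refine (norm_exp_bd ht ?_).1
    rw [Complex.log_im]; exact Complex.abs_arg_le_pi _
  refine ⟨g 0, ?_⟩
  rw [Metric.tendsto_nhds]
  intro ε hε
  rw [Metric.tendstoUniformlyOn_iff] at hg
  obtain ⟨n, hn, hn1⟩ := ((hg (ε / 2) (by positivity)).and (eventually_gt_atTop 0)).exists
  have hn0' : (n : ℂ) ≠ 0 := by exact_mod_cast hn1.ne'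
  have t3 : Tendsto (fun k => cesaro φ f n (y k) - f (y k)) atTop (𝓝 0) := by
    have e : ∀ k, cesaro φ f n (y k) - f (y k)
        = (n : ℂ)⁻¹ * ∑ m ∈ Finset.Icc 1 n, (f (φ^[m] (y k)) - f (y k)) := by
      intro k
      rw [cesaro, Finset.sum_sub_distrib, mul_sub, Finset.sum_const, Nat.card_Icc,
        Nat.add_sub_cancel, nsmul_eq_mul, inv_mul_cancel_left₀ hn0']
    simp only [e]
    have := (tendsto_finsetSum (Finset.Icc 1 n) (fun m _ => hfd m)).const_mul ((n : ℂ)⁻¹)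
    simpa using this
  rw [Metric.tendsto_nhds] at t3
  filter_upwards [t3 (ε / 2) (by positivity)] with k hk
  have h1 := hn (y k) (by simpa using hyl k)
  rw [hginv, dist_eq_norm] at h1
  rw [dist_zero_right] at hk
  show dist (f (y k)) (g 0) < ε
  rw [dist_comm, dist_eq_norm]
  calc ‖g 0 - f (y k)‖ = ‖(g 0 - cesaro φ f n (y k)) + (cesaro φ f n (y k) - f (y k))‖ := by
        congr 1; ring
    _ ≤ _ := norm_add_le _ _
    _ < ε := by linarith

/-! ### Assembling the theorem -/

lemma unif_imp_mean {φ : ℂ → ℂ} (h : UnifMeanErgodicHInf φ) : MeanErgodicHInf φ := by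
  obtain ⟨P, hP⟩ := h
  rintro f ⟨hf, M, hM⟩
  set K : ℝ := |M| + 1 with hK
  have hK0 : 0 < K := by positivity
  have hKc : (K : ℂ) ≠ 0 := by exact_mod_cast hK0.ne'
  set h : ℂ → ℂ := fun z => (K : ℂ)⁻¹ * f z with hh
  have hh1 : ∀ z ∈ ball (0:ℂ) 1, ‖h z‖ ≤ 1 := by
    intro z hz
    simp only [hh]
    rw [norm_mul, norm_inv, Complex.norm_real, Real.norm_of_nonneg hK0.le, inv_mul_le_iff₀ hK0]
    linarith [hM z hz, le_abs_self M]
  have hhH : IsHInf h := ⟨hf.const_mul _, 1, hh1⟩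
  refine ⟨fun z => K * P h z, ?_⟩
  rw [Metric.tendstoUniformlyOn_iff]
  intro ε hε
  obtain ⟨N, hN⟩ := hP (ε / (2 * K)) (by positivity)
  filter_upwards [eventually_ge_atTop N] with n hn z hz
  have h1 := hN n hn h hhH hh1 z hz
  have e : cesaro φ f n z = K * cesaro φ h n z := by
    simp only [cesaro, hh, ← Finset.mul_sum]
    field_simp
  rw [dist_comm, dist_eq_norm, e, ← mul_sub, norm_mul, Complex.norm_real, Real.norm_of_nonneg hK0.le]
  calc K * ‖cesaro φ h n z - P h z‖ ≤ K * (ε / (2 * K)) := mul_le_mul_of_nonneg_left h1 hK0.le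
    _ = ε / 2 := by field_simp
    _ < ε := by linarith

lemma sum_small (a : ℕ → ℂ) {N1 : ℕ} {ε : ℝ} (hε : 0 ≤ ε) (h1 : ∀ m, ‖a m‖ ≤ 2)
    (h2 : ∀ m ≥ N1, ‖a m‖ ≤ ε) (n : ℕ) : ‖∑ m ∈ Finset.Icc 1 n, a m‖ ≤ 2 * N1 + n * ε := by
  by_cases hn : n < N1
  · refine (norm_sum_le_of_le _ fun m _ => h1 m).trans ?_
    rw [Finset.sum_const, Nat.card_Icc, Nat.add_sub_cancel, nsmul_eq_mul]
    have : (n : ℝ) ≤ N1 := by exact_mod_cast hn.le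
    have : 0 ≤ n * ε := by positivity
    linarith
  · have hb : ∀ k : ℕ, ‖∑ m ∈ Finset.Icc 1 (N1 + k), a m‖ ≤ 2 * N1 + k * ε := by
      intro k
      induction k with
      | zero =>
        refine (norm_sum_le_of_le _ fun m _ => h1 m).trans ?_
        rw [Finset.sum_const, Nat.card_Icc, Nat.add_sub_cancel, nsmul_eq_mul]
        simp [mul_comm]
      | succ k ih =>
        rw [← add_assoc, Finset.sum_Icc_succ_top (by omega)]
        refine (norm_add_le _ _).trans ?_
        have := h2 (N1 + k + 1) (by omega)
        push_cast
        linarith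
    obtain ⟨k, rfl⟩ := Nat.exists_eq_add_of_le (not_lt.1 hn)
    refine (hb k).trans ?_
    push_cast
    have : 0 ≤ N1 * ε := by positivity
    linarith

lemma cesaro_sub_const {φ f : ℂ → ℂ} {n : ℕ} (hn : 0 < n) (z c : ℂ) :
    cesaro φ f n z - c = (n : ℂ)⁻¹ * ∑ m ∈ Finset.Icc 1 n, (f (φ^[m] z) - c) := by
  have hn0 : (n : ℂ) ≠ 0 := by exact_mod_cast hn.ne'
  rw [cesaro, Finset.sum_sub_distrib, mul_sub, Finset.sum_const, Nat.card_Icc,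
    Nat.add_sub_cancel, nsmul_eq_mul, inv_mul_cancel_left₀ hn0]

lemma unif_of_conv {φ : ℂ → ℂ} 
    (hm : MapsTo φ (ball (0:ℂ) 1) (ball (0:ℂ) 1)) {z₀ : ℂ} (hz₀ : z₀ ∈ ball (0:ℂ) 1)
    (h : TendstoUniformlyOn (fun (n : ℕ) (z : ℂ) => φ^[n] z) (fun _ => z₀) atTop
            (ball (0:ℂ) 1)) : UnifMeanErgodicHInf φ := by
  refine ⟨fun f _ => f z₀, ?_⟩
  intro ε hε
  have hz₀' : ‖z₀‖ < 1 := by simpa using hz₀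
  set r := 1 - ‖z₀‖ with hr
  have hr0 : 0 < r := by linarith
  rw [Metric.tendstoUniformlyOn_iff] at h
  obtain ⟨N1, hN1⟩ := eventually_atTop.1 (h (min r (ε * r / 4)) (lt_min hr0 (by positivity)))
  obtain ⟨N2, hN2⟩ := exists_nat_ge (4 * N1 / ε)
  refine ⟨max N2 1, fun n hn f hf hf1 z hz => ?_⟩
  have hn1 : 0 < n := lt_of_lt_of_le one_pos ((le_max_right _ _).trans hn)
  have hnN : 4 * N1 / ε ≤ n := hN2.trans (by exact_mod_cast (le_max_left _ _).trans hn)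
  have hsub : ball z₀ r ⊆ ball (0:ℂ) 1 := by
    apply ball_subset_ball'
    rw [dist_zero_right]; linarith
  have hlip : ∀ w ∈ ball z₀ r, dist (f w) (f z₀) ≤ 2 / r * dist w z₀ := by
    intro w hw
    refine Complex.dist_le_div_mul_dist_of_mapsTo_ball (hf.1.mono hsub) ?_ hw
    intro v hv
    rw [mem_closedBall, dist_eq_norm]
    refine (norm_sub_le _ _).trans ?_
    linarith [hf1 v (hsub hv), hf1 z₀ hz₀]
  rw [cesaro_sub_const hn1, norm_mul, norm_inv, Complex.norm_natCast,
    inv_mul_le_iff₀ (by exact_mod_cast hn1)]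
  refine (sum_small _ (N1 := N1) (ε := ε / 2) (by positivity) ?_ ?_ n).trans ?_
  · intro m
    refine (norm_sub_le _ _).trans ?_
    linarith [hf1 _ (hm.iterate m hz), hf1 z₀ hz₀]
  · intro m hmN
    have h1 := hN1 m hmN z hz
    rw [dist_comm] at h1
    obtain ⟨h2, h3⟩ := lt_min_iff.1 h1
    rw [← dist_eq_norm]
    refine (hlip _ (mem_ball.2 h2)).trans ?_
    calc 2 / r * dist (φ^[m] z) z₀ ≤ 2 / r * (ε * r / 4) :=
          mul_le_mul_of_nonneg_left h3.le (by positivity)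
      _ = ε / 2 := by field_simp; norm_num
  · rw [div_le_iff₀ hε] at hnN
    linarith

lemma sum_Icc_add (a : ℕ → ℂ) (k n : ℕ) : ∑ m ∈ Finset.Icc 1 (k + n), a m
    = ∑ m ∈ Finset.Icc 1 k, a m + ∑ m ∈ Finset.Icc 1 n, a (k + m) := by
  induction n with
  | zero => simp
  | succ n ih =>
    rw [← add_assoc, Finset.sum_Icc_succ_top (by omega), Finset.sum_Icc_succ_top (by omega), ih]
    simp only [add_assoc]

lemma periodic_sum (a : ℕ → ℂ) {k : ℕ} (hper : ∀ m, a (k + m) = a m) (h1 : ∀ m, ‖a m‖ ≤ 2)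
    (h0 : ∑ m ∈ Finset.Icc 1 k, a m = 0) (hk : 0 < k) (n : ℕ) :
    ‖∑ m ∈ Finset.Icc 1 n, a m‖ ≤ 2 * k := by
  induction n using Nat.strong_induction_on with
  | _ n ih =>
    by_cases hn : n < k
    · refine (norm_sum_le_of_le _ fun m _ => h1 m).trans ?_
      rw [Finset.sum_const, Nat.card_Icc, Nat.add_sub_cancel, nsmul_eq_mul]
      have : (n : ℝ) ≤ k := by exact_mod_cast hn.le
      linarith
    · obtain ⟨j, rfl⟩ := Nat.exists_eq_add_of_le (not_lt.1 hn)
      rw [sum_Icc_add, h0, zero_add]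
      simp only [hper]
      exact ih j (by omega)

lemma unif_of_periodic {φ : ℂ → ℂ} 
    (hm : MapsTo φ (ball (0:ℂ) 1) (ball (0:ℂ) 1)) {k : ℕ} (hk : 0 < k)
    (hper : ∀ z ∈ ball (0:ℂ) 1, φ^[k] z = z) : UnifMeanErgodicHInf φ := by
  refine ⟨fun f z => cesaro φ f k z, ?_⟩
  intro ε hε
  obtain ⟨N2, hN2⟩ := exists_nat_ge (2 * k / ε)
  refine ⟨max N2 1, fun n hn f hf hf1 z hz => ?_⟩
  have hn1 : 0 < n := lt_of_lt_of_le one_pos ((le_max_right _ _).trans hn)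
  have hnN : 2 * k / ε ≤ n := hN2.trans (by exact_mod_cast (le_max_left _ _).trans hn)
  have hk0 : (0:ℝ) < k := by exact_mod_cast hk
  have hkc : (k : ℂ) ≠ 0 := by exact_mod_cast hk.ne'
  have hA : ‖cesaro φ f k z‖ ≤ 1 := by
    rw [cesaro, norm_mul, norm_inv, Complex.norm_natCast, inv_mul_le_iff₀ hk0]
    refine (norm_sum_le_of_le _ fun m _ => hf1 _ (hm.iterate m hz)).trans ?_
    simp
  rw [cesaro_sub_const hn1, norm_mul, norm_inv, Complex.norm_natCast,
    inv_mul_le_iff₀ (by exact_mod_cast hn1)]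
  refine (periodic_sum _ (k := k) ?_ ?_ ?_ hk n).trans ?_
  · intro m
    rw [add_comm, Function.iterate_add_apply, hper z hz]
  · intro m
    refine (norm_sub_le _ _).trans ?_
    linarith [hf1 _ (hm.iterate m hz)]
  · have := cesaro_sub_const (φ := φ) (f := f) hk z (cesaro φ f k z)
    rw [sub_self] at this
    exact (mul_eq_zero.1 this.symm).resolve_left (inv_ne_zero hkc)
  · rw [div_le_iff₀ hε] at hnN
    linarith

lemma conj_iter {φ : ℂ → ℂ} (hm : MapsTo φ (ball (0:ℂ) 1) (ball (0:ℂ) 1)) {p : ℂ} (hp : ‖p‖ < 1)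
    (n : ℕ) {z : ℂ} (hz : ‖z‖ < 1) :
    (mob p ∘ φ ∘ mob p)^[n] z = mob p (φ^[n] (mob p z)) := by
  induction n with
  | zero => simp [mob_mob hp hz]
  | succ n ih =>
    rw [Function.iterate_succ_apply', ih, Function.iterate_succ_apply']
    simp only [Function.comp]
    rw [mob_mob hp (iter_lt hm n (mob_lt hp hz))]

lemma mean_imp {φ : ℂ → ℂ} (hd : DifferentiableOn ℂ φ (ball (0:ℂ) 1))
    (hm : MapsTo φ (ball (0:ℂ) 1) (ball (0:ℂ) 1)) (hme : MeanErgodicHInf φ) :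
    ((∃ z₀ ∈ ball (0:ℂ) 1,
          TendstoUniformlyOn (fun (n : ℕ) (z : ℂ) => φ^[n] z) (fun _ => z₀) atTop
            (ball (0:ℂ) 1)) ∨
        (IsEllipticAutomorphism φ ∧ ∃ k : ℕ, 0 < k ∧ ∀ z ∈ ball (0:ℂ) 1, φ^[k] z = z)) := by
  by_cases hub : ∀ r < (1:ℝ), ∃ n, r < ‖φ^[n] 0‖
  · exact (not_me_of_unbounded hd hm hub hme).elim
  push Not at hub
  obtain ⟨r, hr, hb⟩ := hub
  obtain ⟨p, hp, hfix⟩ := exists_fixed_of_bounded hd hm hr hb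
  have hpb : p ∈ ball (0:ℂ) 1 := by simpa using hp
  have hσd := mob_diff hp
  have hσm := mob_maps hp
  set ψ : ℂ → ℂ := mob p ∘ φ ∘ mob p with hψ
  have hψd : DifferentiableOn ℂ ψ (ball (0:ℂ) 1) :=
    hσd.comp (hd.comp hσd hσm) (hm.comp hσm)
  have hψm : MapsTo ψ (ball (0:ℂ) 1) (ball (0:ℂ) 1) := hσm.comp (hm.comp hσm)
  have hψ0 : ψ 0 = 0 := by simp [hψ, mob_zero, hfix, mob_self]
  have hψme : MeanErgodicHInf ψ := by
    rintro f ⟨hf, M, hM⟩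
    obtain ⟨g, hg⟩ := hme (f ∘ mob p) ⟨hf.comp hσd hσm, M, fun z hz => hM _ (hσm hz)⟩
    refine ⟨g ∘ mob p, ?_⟩
    rw [Metric.tendstoUniformlyOn_iff] at hg ⊢
    intro ε hε
    filter_upwards [hg ε hε] with n hn z hz
    have h1 := hn (mob p z) (hσm hz)
    have e : cesaro φ (f ∘ mob p) n (mob p z) = cesaro ψ f n z := by
      simp only [cesaro, Function.comp]
      congr 1
      refine Finset.sum_congr rfl fun m _ => ?_
      rw [hψ, conj_iter hm hp m (by simpa using hz)]
    rw [e] at h1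
    exact h1
  have hback : ∀ n : ℕ, ∀ z ∈ ball (0:ℂ) 1, φ^[n] z = mob p (ψ^[n] (mob p z)) := by
    intro n z hz
    have hz' : ‖z‖ < 1 := by simpa using hz
    rw [hψ, conj_iter hm hp n (mob_lt hp hz'), mob_mob hp hz', mob_mob hp (iter_lt hm n hz')]
  rcases fix_zero hψd hψm hψ0 hψme with h | ⟨k, hk, hper⟩
  · left
    refine ⟨p, hpb, ?_⟩
    rw [Metric.tendstoUniformlyOn_iff] at h ⊢
    intro ε hε
    have hp0 : 0 < 1 - ‖p‖ := by linarith
    filter_upwards [h (ε * (1 - ‖p‖) ^ 2) (by positivity)] with n hn z hz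
    have hz' : ‖z‖ < 1 := by simpa using hz
    have h1 := hn (mob p z) (hσm hz)
    rw [dist_zero_left] at h1
    rw [hback n z hz, dist_comm, dist_eq_norm]
    have h2 := mob_lip (w := 0) hp (iter_lt hψm n (mob_lt hp hz')) (by simp)
    rw [mob_zero, sub_zero] at h2
    refine h2.trans_lt ?_
    rw [mul_one_div, div_lt_iff₀ (by positivity)]
    exact h1
  · right
    have hφper : ∀ z ∈ ball (0:ℂ) 1, φ^[k] z = z := by
      intro z hz
      rw [hback k z hz, hper _ (hσm hz), mob_mob hp (by simpa using hz)]
    refine ⟨⟨⟨hd, hm, φ^[k - 1], iter_diff hd hm _, hm.iterate _, ?_, ?_⟩, p, hpb, hfix⟩, k, hk, hφper⟩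
    · intro z hz
      rw [← Function.iterate_succ_apply, Nat.succ_eq_add_one, Nat.sub_add_cancel hk]
      exact hφper z hz
    · intro z hz
      rw [← Function.iterate_succ_apply' φ, Nat.succ_eq_add_one, Nat.sub_add_cancel hk]
      exact hφper z hz

lemma imp_unif {φ : ℂ → ℂ}
    (hm : MapsTo φ (ball (0:ℂ) 1) (ball (0:ℂ) 1))
    (h : (∃ z₀ ∈ ball (0:ℂ) 1,
          TendstoUniformlyOn (fun (n : ℕ) (z : ℂ) => φ^[n] z) (fun _ => z₀) atTop
            (ball (0:ℂ) 1)) ∨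
        (IsEllipticAutomorphism φ ∧ ∃ k : ℕ, 0 < k ∧ ∀ z ∈ ball (0:ℂ) 1, φ^[k] z = z)) :
    UnifMeanErgodicHInf φ := by
  rcases h with ⟨z₀, hz₀, h⟩ | ⟨-, k, hk, h⟩
  · exact unif_of_conv hm hz₀ h
  · exact unif_of_periodic hm hk h

/-- **Theorem A.** Let `φ` be a holomorphic self-map of `𝔻`. The following are equivalent:
(i) `C_φ : H^∞(𝔻) → H^∞(𝔻)` is mean ergodic; (ii) `C_φ` is uniformly mean ergodic on
`H^∞(𝔻)`; (iii) either `(φ^n)` converges uniformly on `𝔻` to a constant `z₀ ∈ 𝔻`, or `φ`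
is a periodic elliptic automorphism. -/
theorem stmt_15 (φ : ℂ → ℂ) (hφd : DifferentiableOn ℂ φ (ball (0:ℂ) 1))
    (hφm : MapsTo φ (ball (0:ℂ) 1) (ball (0:ℂ) 1)) :
    (MeanErgodicHInf φ ↔
      ((∃ z₀ ∈ ball (0:ℂ) 1,
          TendstoUniformlyOn (fun (n : ℕ) (z : ℂ) => φ^[n] z) (fun _ => z₀) atTop
            (ball (0:ℂ) 1)) ∨
        (IsEllipticAutomorphism φ ∧ ∃ k : ℕ, 0 < k ∧ ∀ z ∈ ball (0:ℂ) 1, φ^[k] z = z))) ∧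
    (UnifMeanErgodicHInf φ ↔
      ((∃ z₀ ∈ ball (0:ℂ) 1,
          TendstoUniformlyOn (fun (n : ℕ) (z : ℂ) => φ^[n] z) (fun _ => z₀) atTop
            (ball (0:ℂ) 1)) ∨
        (IsEllipticAutomorphism φ ∧ ∃ k : ℕ, 0 < k ∧ ∀ z ∈ ball (0:ℂ) 1, φ^[k] z = z))) := by
  exact ⟨⟨fun h => mean_imp hφd hφm h, fun h => unif_imp_mean (imp_unif hφm h)⟩,
    ⟨fun h => mean_imp hφd hφm (unif_imp_mean h), fun h => imp_unif hφm h⟩⟩
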